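/- Let γ ≥ 1 and let A ∈ ℝ^{m×n} be partitioned in blocks A = [[A11, A12],[A21, A22]] with A11 ∈ ℝ^{k×k} a γ-local maximum volume k×k submatrix of A, and let A_k = [[A11, A12],[A21, A21·A11⁻¹·A12]] be the rank-k approximant of the partial LU factorization. Then: (a) ‖A11⁻¹A12‖_max ≤ γ and ‖A21A11⁻¹‖_max ≤ γ; (b) for 1 ≤ j ≤ k, (1/(1 + 5γ²k√(mn)))·σ_j(A) ≤ σ_j(A_k) ≤ (1 + 5γ²k√(mn))·σ_j(A); and (c) for 1 ≤ j ≤ min(m,n) − k, σ_{k+j}(A) ≤ σ_j(A − A_k) ≤ (1 + 5γ²k√(mn))·σ_{k+j}(A). -/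

import Mathlib

open Matrix

/-- The spectral norm (`‖·‖₂`, largest singular value) of a real matrix. -/
noncomputable def specNorm {m n : Type*} [Fintype m] [Fintype n] [DecidableEq n]
    (A : Matrix m n ℝ) : ℝ :=
  ‖LinearMap.toContinuousLinearMap (Matrix.toEuclideanLin A)‖

/-- `sval A j` is the `j`-th largest singular value of `A` (1-indexed), characterized as the
distance, in the spectral norm, from `A` to the set of matrices of rank `< j`. -/
noncomputable def sval {m n : Type*} [Fintype m] [Fintype n] [DecidableEq n]
    (A : Matrix m n ℝ) (j : ℕ) : ℝ :=
  sInf {x : ℝ | ∃ B : Matrix m n ℝ, B.rank < j ∧ x = specNorm (A - B)}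

/-- The volume of a matrix: the product of its singular values. -/
noncomputable def vol {m n : Type*} [Fintype m] [Fintype n] [DecidableEq n]
    (A : Matrix m n ℝ) : ℝ :=
  ∏ j ∈ Finset.Icc 1 (min (Fintype.card m) (Fintype.card n)), sval A j

/-- `DiffOne b r` : `r` is an injective selection of indices whose image (index set)
differs from the index set selected by `b` in at most one element. -/
def DiffOne {ι α : Type*} [Fintype ι] [DecidableEq α] (b r : ι → α) : Prop :=
  Function.Injective r ∧ (Finset.univ.image r \ Finset.univ.image b).card ≤ 1

/-- Squared Euclidean norm. -/
def nsq {n : Type*} [Fintype n] (x : n → ℝ) : ℝ := x ⬝ᵥ x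

lemma nsq_eq_sum {n : Type*} [Fintype n] (x : n → ℝ) : nsq x = ∑ i, x i ^ 2 := by
  simp [nsq, dotProduct, pow_two]

lemma nsq_nonneg {n : Type*} [Fintype n] (x : n → ℝ) : 0 ≤ nsq x := by
  rw [nsq_eq_sum]; positivity

lemma nsq_pos {n : Type*} [Fintype n] {x : n → ℝ} (h : x ≠ 0) : 0 < nsq x := by
  refine lt_of_le_of_ne (nsq_nonneg x) (fun h0 => h ?_)
  exact dotProduct_self_eq_zero.mp h0.symm

lemma nsq_eq_norm {n : Type*} [Fintype n] (x : n → ℝ) : nsq x = ‖WithLp.toLp 2 x‖ ^ 2 := by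
  rw [nsq_eq_sum, EuclideanSpace.norm_sq_eq]; simp

lemma specNorm_nonneg {m n : Type*} [Fintype m] [Fintype n] [DecidableEq n]
    (A : Matrix m n ℝ) : 0 ≤ specNorm A := norm_nonneg _

lemma nsq_mulVec_le {m n : Type*} [Fintype m] [Fintype n] [DecidableEq n]
    (A : Matrix m n ℝ) (x : n → ℝ) : nsq (A *ᵥ x) ≤ specNorm A ^ 2 * nsq x := by
  rw [nsq_eq_norm, nsq_eq_norm, ← mul_pow]
  apply pow_le_pow_left₀ (norm_nonneg _)
  have := (LinearMap.toContinuousLinearMap (Matrix.toEuclideanLin A)).le_opNorm (WithLp.toLp 2 x)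
  simpa [specNorm, toLpLin_toLp] using this

lemma specNorm_le {m n : Type*} [Fintype m] [Fintype n] [DecidableEq n]
    (A : Matrix m n ℝ) {c : ℝ} (hc : 0 ≤ c) (h : ∀ x, nsq (A *ᵥ x) ≤ c ^ 2 * nsq x) :
    specNorm A ≤ c := by
  apply ContinuousLinearMap.opNorm_le_bound _ hc
  intro x
  have := h x.ofLp
  rw [nsq_eq_norm, nsq_eq_norm, ← mul_pow] at this
  have := le_of_sq_le_sq this (by positivity)
  simpa [toLpLin_apply] using this

lemma sval_bdd {m n : Type*} [Fintype m] [Fintype n] [DecidableEq n]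
    (A : Matrix m n ℝ) (j : ℕ) :
    BddBelow {x : ℝ | ∃ B : Matrix m n ℝ, B.rank < j ∧ x = specNorm (A - B)} :=
  ⟨0, by rintro _ ⟨B, -, rfl⟩; exact specNorm_nonneg _⟩

lemma sval_le {m n : Type*} [Fintype m] [Fintype n] [DecidableEq n]
    (A B : Matrix m n ℝ) {j : ℕ} (h : B.rank < j) : sval A j ≤ specNorm (A - B) :=
  csInf_le (sval_bdd A j) ⟨B, h, rfl⟩

lemma le_sval {m n : Type*} [Fintype m] [Fintype n] [DecidableEq n]
    (A : Matrix m n ℝ) {j : ℕ} (hj : 1 ≤ j) {c : ℝ}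
    (h : ∀ B : Matrix m n ℝ, B.rank < j → c ≤ specNorm (A - B)) : c ≤ sval A j := by
  apply le_csInf
  · exact ⟨_, 0, by rw [Matrix.rank_zero]; omega, rfl⟩
  · rintro _ ⟨B, hB, rfl⟩; exact h B hB

lemma sval_nonneg {m n : Type*} [Fintype m] [Fintype n] [DecidableEq n]
    (A : Matrix m n ℝ) (j : ℕ) : 0 ≤ sval A j := by
  apply Real.sInf_nonneg
  rintro _ ⟨B, -, rfl⟩; exact specNorm_nonneg _

/-- Multiplicative bound. -/
lemma sval_mul_mul_le {l m n o : Type*} [Fintype l] [Fintype m] [Fintype n] [Fintype o]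
    [DecidableEq n] [DecidableEq o]
    (P : Matrix l m ℝ) (M : Matrix m n ℝ) (Q : Matrix n o ℝ) {j : ℕ} (hj : 1 ≤ j) {p r : ℝ}
    (hp : 0 < p) (hr : 0 < r) (hP : ∀ x, nsq (P *ᵥ x) ≤ p ^ 2 * nsq x)
    (hQ : ∀ x, nsq (Q *ᵥ x) ≤ r ^ 2 * nsq x) :
    sval (P * M * Q) j ≤ p * r * sval M j := by
  rw [← div_le_iff₀' (by positivity)]
  apply le_sval _ hj
  intro B hB
  rw [div_le_iff₀' (by positivity)]
  refine (sval_le (P * M * Q) (P * B * Q) ?_).trans ?_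
  · exact lt_of_le_of_lt ((Matrix.rank_mul_le_left _ _).trans (Matrix.rank_mul_le_right _ _)) hB
  · rw [← Matrix.sub_mul, ← Matrix.mul_sub]
    apply specNorm_le _ (mul_nonneg (by positivity) (specNorm_nonneg _))
    intro x
    rw [← mulVec_mulVec, ← mulVec_mulVec]
    calc _ ≤ p ^ 2 * nsq ((M - B) *ᵥ Q *ᵥ x) := hP _
      _ ≤ p ^ 2 * (specNorm (M - B) ^ 2 * (r ^ 2 * nsq x)) := by
        gcongr
        exact (nsq_mulVec_le _ _).trans (by gcongr; exact hQ x)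
      _ = _ := by ring

/-- Lower bound via a `j`-dimensional test family. -/
lemma le_sval_of_test {m n s : Type*} [Fintype m] [Fintype n] [DecidableEq n] [Fintype s]
    [DecidableEq s] (M : Matrix m n ℝ) (W : Matrix n s ℝ) {j : ℕ} (hj : 1 ≤ j)
    (hjs : j ≤ Fintype.card s) {c : ℝ}
    (h1 : ∀ y, nsq (W *ᵥ y) ≤ nsq y) (h2 : ∀ y, c ^ 2 * nsq y ≤ nsq (M *ᵥ W *ᵥ y)) :
    c ≤ sval M j := by
  apply le_sval _ hj
  intro B hB
  have hr : (B * W).rank < Fintype.card s :=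
    lt_of_le_of_lt (Matrix.rank_mul_le_left _ _) (by omega)
  have : ∃ y, y ≠ 0 ∧ (B * W) *ᵥ y = 0 := by
    by_contra! hcon
    have hinj : Function.Injective (B * W).mulVecLin := by
      rw [← LinearMap.ker_eq_bot, LinearMap.ker_eq_bot']
      intro y hy
      by_contra hne
      exact hcon y hne hy
    have := LinearMap.finrank_range_of_inj hinj
    rw [Module.finrank_fintype_fun_eq_card] at this
    simp only [Matrix.rank] at hr
    omega
  obtain ⟨y, hy0, hy⟩ := this
  have hpos := nsq_pos hy0
  have e : M *ᵥ W *ᵥ y = (M - B) *ᵥ W *ᵥ y := by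
    rw [sub_mulVec, mulVec_mulVec _ B, hy, sub_zero]
  have h3 := h2 y
  rw [e] at h3
  have h4 : c ^ 2 * nsq y ≤ specNorm (M - B) ^ 2 * nsq y :=
    h3.trans ((nsq_mulVec_le _ _).trans (by gcongr; exact h1 y))
  have h5 := le_of_mul_le_mul_right h4 hpos
  exact le_of_sq_le_sq h5 (specNorm_nonneg _)

lemma exists_svd {m n : Type*} [Fintype m] [Fintype n] [DecidableEq n] (M : Matrix m n ℝ) :
    ∃ (U : Matrix n (Fin (Fintype.card n)) ℝ) (l : Fin (Fintype.card n) → ℝ),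
      Antitone l ∧ (∀ i, 0 ≤ l i) ∧ Uᵀ * U = 1 ∧ U * Uᵀ = 1 ∧
      Mᵀ * M = U * diagonal l * Uᵀ ∧ ∏ i, l i = (Mᵀ * M).det := by
  have hA : (Mᵀ * M).IsHermitian := by
    simpa using isHermitian_conjTranspose_mul_self M
  have hps : (Mᵀ * M).PosSemidef := by
    simpa using posSemidef_conjTranspose_mul_self M
  let e : Fin (Fintype.card n) ≃ n := Fintype.equivOfCardEq (Fintype.card_fin _)
  have hle : ∀ i, hA.eigenvalues (e i) = hA.eigenvalues₀ i := by
    intro i; simp [IsHermitian.eigenvalues, e]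
  let V : Matrix n n ℝ := hA.eigenvectorUnitary
  have hV1 : Vᵀ * V = 1 := by
    have := (Matrix.mem_unitaryGroup_iff'.mp hA.eigenvectorUnitary.2)
    simpa [star_eq_conjTranspose] using this
  have hV2 : V * Vᵀ = 1 := by
    have := (Matrix.mem_unitaryGroup_iff.mp hA.eigenvectorUnitary.2)
    simpa [star_eq_conjTranspose] using this
  have hs : Mᵀ * M = V * diagonal hA.eigenvalues * Vᵀ := by
    have := hA.spectral_theorem
    rw [Unitary.conjStarAlgAut_apply] at this
    simpa [star_eq_conjTranspose, V, Function.comp_def] using this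
  refine ⟨V.submatrix id e, hA.eigenvalues₀, hA.eigenvalues₀_antitone, ?_, ?_, ?_, ?_, ?_⟩
  · intro i; rw [← hle]; exact hps.eigenvalues_nonneg _
  · rw [transpose_submatrix, ← submatrix_mul _ _ _ _ _ Function.bijective_id, hV1]
    exact submatrix_one_equiv e
  · rw [transpose_submatrix, submatrix_mul_equiv, hV2, submatrix_id_id]
  · have : (diagonal hA.eigenvalues₀) = (diagonal hA.eigenvalues).submatrix e e := by
      rw [submatrix_diagonal_equiv]; congr 1; ext i; simp [hle]
    rw [this, transpose_submatrix, submatrix_mul_equiv, submatrix_mul_equiv, submatrix_id_id]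
    exact hs
  · rw [hA.det_eq_prod_eigenvalues, ← Equiv.prod_comp e]
    simp [hle]

lemma nsq_mulVec_svd {m n s : Type*} [Fintype m] [Fintype n] [DecidableEq n] [Fintype s]
    [DecidableEq s]
    {M : Matrix m n ℝ} {U : Matrix n s ℝ} {l : s → ℝ}
    (h1 : Uᵀ * U = 1) (h : Mᵀ * M = U * diagonal l * Uᵀ) (y : s → ℝ) :
    nsq (M *ᵥ U *ᵥ y) = ∑ i, l i * y i ^ 2 := by
  have e : Uᵀ * (Mᵀ * M) * U = diagonal l := by
    rw [h]
    calc _ = (Uᵀ * U) * diagonal l * (Uᵀ * U) := by simp only [Matrix.mul_assoc]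
      _ = _ := by rw [h1]; simp
  have : nsq (M *ᵥ U *ᵥ y) = y ⬝ᵥ (Uᵀ * (Mᵀ * M) * U) *ᵥ y := by
    rw [nsq, ← mulVec_mulVec, ← mulVec_mulVec, ← mulVec_mulVec, dotProduct_mulVec y,
      vecMul_transpose, dotProduct_mulVec (U *ᵥ y), vecMul_transpose]
  rw [this, e]
  simp only [dotProduct, mulVec_diagonal]
  exact Finset.sum_congr rfl fun i _ => by ring

lemma nsq_mulVec_orth {n s : Type*} [Fintype n] [Fintype s]
    [DecidableEq s] {U : Matrix n s ℝ}
    (h1 : Uᵀ * U = 1) (y : s → ℝ) : nsq (U *ᵥ y) = nsq y := by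
  rw [nsq, dotProduct_mulVec, ← mulVec_transpose, mulVec_mulVec, h1, one_mulVec, nsq]

/-- Extension by zero. -/
def extMat (j N : ℕ) : Matrix (Fin N) (Fin j) ℝ := of fun a b => if a.val = b.val then 1 else 0

lemma extMat_orth {j N : ℕ} (h : j ≤ N) : (extMat j N)ᵀ * extMat j N = 1 := by
  ext a b
  simp only [extMat, mul_apply, transpose_apply, of_apply, one_apply]
  rw [Finset.sum_eq_single (Fin.castLE h a)]
  · simp [Fin.ext_iff]
  · intro c _ hc
    have : c.val ≠ a.val := fun h' => hc (Fin.ext h')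
    simp [this]
  · simp

lemma extMat_mulVec_zero {j N : ℕ} (y : Fin j → ℝ) (i : Fin N) (hi : j ≤ i.val) :
    (extMat j N *ᵥ y) i = 0 := by
  simp only [extMat, mulVec, dotProduct, of_apply]
  apply Finset.sum_eq_zero
  intro b _
  have : i.val ≠ b.val := by omega
  simp [this]

lemma svd_main {m n : Type*} [Fintype m] [Fintype n] [DecidableEq n]
    {M : Matrix m n ℝ} {U : Matrix n (Fin (Fintype.card n)) ℝ} {l : Fin (Fintype.card n) → ℝ}
    (hl : Antitone l) (hl0 : ∀ i, 0 ≤ l i) (h1 : Uᵀ * U = 1) (h2 : U * Uᵀ = 1)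
    (h : Mᵀ * M = U * diagonal l * Uᵀ) (i : Fin (Fintype.card n)) :
    sval M (i + 1) = √(l i) ∧ ∃ W : Matrix n (Fin (i + 1)) ℝ,
      (∀ y, nsq (W *ᵥ y) ≤ nsq y) ∧ (∀ y, √(l i) ^ 2 * nsq y ≤ nsq (M *ᵥ W *ᵥ y)) := by
  have key : ∃ W : Matrix n (Fin (i + 1)) ℝ,
      (∀ y, nsq (W *ᵥ y) ≤ nsq y) ∧ (∀ y, √(l i) ^ 2 * nsq y ≤ nsq (M *ᵥ W *ᵥ y)) := by
    refine ⟨U * (extMat (i + 1) (Fintype.card n) : Matrix (Fin (Fintype.card n)) (Fin (i + 1)) ℝ), ?_, ?_⟩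
    · intro y
      rw [← mulVec_mulVec, nsq_mulVec_orth h1, nsq_mulVec_orth (extMat_orth (by omega))]
    · intro y
      rw [← mulVec_mulVec, nsq_mulVec_svd h1 h, Real.sq_sqrt (hl0 i),
        ← nsq_mulVec_orth (extMat_orth (N := Fintype.card n) (by omega)) y, nsq_eq_sum,
        Finset.mul_sum]
      apply Finset.sum_le_sum
      intro a _
      by_cases ha : a ≤ i
      · exact mul_le_mul_of_nonneg_right (hl ha) (by positivity)
      · rw [extMat_mulVec_zero _ _ (by omega)]; simp
  refine ⟨le_antisymm ?_ ?_, key⟩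
  · let d : Fin (Fintype.card n) → ℝ := fun a => if a < i then 1 else 0
    refine (sval_le M (M * (U * diagonal d * Uᵀ)) ?_).trans ?_
    · have : (diagonal d).rank ≤ i.val := by
        rw [rank_diagonal, Fintype.card_subtype]
        have : (Finset.univ.filter fun a => d a ≠ 0) = Finset.Iio i := by
          ext a; simp [d]
        rw [this, Fin.card_Iio]
      have h3 : (M * (U * diagonal d * Uᵀ)).rank ≤ (diagonal d).rank :=
        (Matrix.rank_mul_le_right _ _).trans
          ((Matrix.rank_mul_le_left _ _).trans (Matrix.rank_mul_le_right _ _))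
      omega
    · apply specNorm_le _ (Real.sqrt_nonneg _)
      intro x
      let y := Uᵀ *ᵥ x
      have hx : x = U *ᵥ y := by simp [y, h2]
      have e : (M - M * (U * diagonal d * Uᵀ)) *ᵥ x = M *ᵥ U *ᵥ (y - diagonal d *ᵥ y) := by
        rw [mulVec_sub, mulVec_sub, ← hx, sub_mulVec]
        simp only [y, mulVec_mulVec, Matrix.mul_assoc]
      rw [e, nsq_mulVec_svd h1 h, hx, nsq_mulVec_orth h1, Real.sq_sqrt (hl0 i), nsq_eq_sum,
        Finset.mul_sum]
      apply Finset.sum_le_sum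
      intro a _
      simp only [Pi.sub_apply, mulVec_diagonal, d]
      by_cases ha : a < i
      · simp only [ha, if_true, one_mul, sub_self]
        have := mul_nonneg (hl0 i) (sq_nonneg (y a))
        simpa using this
      · simp only [ha, if_false, zero_mul, sub_zero]
        exact mul_le_mul_of_nonneg_right (hl (not_lt.mp ha)) (by positivity)
  · obtain ⟨W, hW1, hW2⟩ := key
    exact le_sval_of_test M W (by omega) (by simp) hW1 hW2

lemma exists_test {m n : Type*} [Fintype m] [Fintype n] [DecidableEq n]
    (M : Matrix m n ℝ) {j : ℕ} (hj : 1 ≤ j) (hjn : j ≤ Fintype.card n) :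
    ∃ W : Matrix n (Fin j) ℝ,
      (∀ y, nsq (W *ᵥ y) ≤ nsq y) ∧ (∀ y, sval M j ^ 2 * nsq y ≤ nsq (M *ᵥ W *ᵥ y)) := by
  obtain ⟨U, l, hl, hl0, h1, h2, h, -⟩ := exists_svd M
  obtain ⟨i, rfl⟩ : ∃ i, j = i + 1 := ⟨j - 1, by omega⟩
  obtain ⟨e, W, hW⟩ := svd_main hl hl0 h1 h2 h ⟨i, by omega⟩
  simp only at e
  rw [e]
  exact ⟨W, hW⟩

lemma vol_eq_abs_det {k : ℕ} (M : Matrix (Fin k) (Fin k) ℝ) : vol M = |M.det| := by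
  obtain ⟨U, l, hl, hl0, h1, h2, h, hd⟩ := exists_svd M
  have : |M.det| = √(∏ i, l i) := by
    rw [hd, det_mul, det_transpose, Real.sqrt_mul_self_eq_abs]
  have e : vol M = ∏ i, √(l i) := by
    rw [vol, min_self]
    have := fun i => (svd_main hl hl0 h1 h2 h i).1
    simp_rw [← this]
    rw [Fin.prod_univ_eq_prod_range (fun i => sval M (i + 1)), Finset.range_eq_Ico,
      Finset.prod_Ico_add' (fun i => sval M i)]
    rfl
  have e2 : vol M * vol M = ∏ i, l i := by
    rw [e, ← Finset.prod_mul_distrib]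
    exact Finset.prod_congr rfl fun i _ => (Real.mul_self_sqrt (hl0 i))
  have e3 : 0 ≤ vol M := Finset.prod_nonneg fun i _ => sval_nonneg _ _
  rw [this, ← e2, Real.sqrt_mul_self e3]

lemma nsq_elim {m n : Type*} [Fintype m] [Fintype n] (a : m → ℝ) (b : n → ℝ) :
    nsq (Sum.elim a b) = nsq a + nsq b := by
  simp [nsq_eq_sum]

lemma nsq_sum {m n : Type*} [Fintype m] [Fintype n] (x : m ⊕ n → ℝ) :
    nsq x = nsq (x ∘ Sum.inl) + nsq (x ∘ Sum.inr) := by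
  simp [nsq_eq_sum]

lemma nsq_smul {n : Type*} [Fintype n] (c : ℝ) (x : n → ℝ) : nsq (c • x) = c ^ 2 * nsq x := by
  simp [nsq_eq_sum, Finset.mul_sum, mul_pow]

lemma nsq_add_le {n : Type*} [Fintype n] (x y : n → ℝ) : nsq (x + y) ≤ 2 * nsq x + 2 * nsq y := by
  simp only [nsq_eq_sum, Finset.mul_sum, ← Finset.sum_add_distrib, Pi.add_apply]
  apply Finset.sum_le_sum
  intro i _
  nlinarith [sq_nonneg (x i - y i)]

/-- Squared Frobenius norm. -/
def frob {m n : Type*} [Fintype m] [Fintype n] (M : Matrix m n ℝ) : ℝ := ∑ i, ∑ j, M i j ^ 2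

lemma frob_nonneg {m n : Type*} [Fintype m] [Fintype n] (M : Matrix m n ℝ) : 0 ≤ frob M := by
  unfold frob; positivity

lemma nsq_mulVec_le_frob {m n : Type*} [Fintype m] [Fintype n] (M : Matrix m n ℝ) (x : n → ℝ) :
    nsq (M *ᵥ x) ≤ frob M * nsq x := by
  rw [nsq_eq_sum, nsq_eq_sum, frob, Finset.sum_mul]
  apply Finset.sum_le_sum
  intro i _
  exact Finset.sum_mul_sq_le_sq_mul_sq _ _ _

lemma frob_neg {m n : Type*} [Fintype m] [Fintype n] (M : Matrix m n ℝ) : frob (-M) = frob M := by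
  simp [frob]

lemma frob_le {m n : ℕ} (M : Matrix (Fin m) (Fin n) ℝ) {c : ℝ}
    (h : ∀ i j, |M i j| ≤ c) : frob M ≤ c ^ 2 * m * n := by
  have : frob M ≤ ∑ _i : Fin m, ∑ _j : Fin n, c ^ 2 := by
    apply Finset.sum_le_sum; intro i _
    apply Finset.sum_le_sum; intro j _
    rw [← sq_abs]
    exact pow_le_pow_left₀ (abs_nonneg _) (h i j) 2
  refine this.trans (le_of_eq ?_)
  simp; ring

lemma frob_mul_frob_le {m n p q : ℕ} (M : Matrix (Fin m) (Fin n) ℝ) (N : Matrix (Fin p) (Fin q) ℝ)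
    {c : ℝ} (h : ∀ i j a b, |M i j * N a b| ≤ c) :
    frob M * frob N ≤ c ^ 2 * m * n * p * q := by
  have e : frob M * frob N = ∑ i, ∑ j, ∑ a, ∑ b, (M i j * N a b) ^ 2 := by
    simp only [frob, mul_pow]
    rw [Finset.sum_mul]
    refine Finset.sum_congr rfl fun i _ => ?_
    rw [Finset.sum_mul]
    refine Finset.sum_congr rfl fun j _ => ?_
    simp only [Finset.mul_sum]
  have : frob M * frob N ≤ ∑ _i : Fin m, ∑ _j : Fin n, ∑ _a : Fin p, ∑ _b : Fin q, c ^ 2 := by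
    rw [e]
    apply Finset.sum_le_sum; intro i _
    apply Finset.sum_le_sum; intro j _
    apply Finset.sum_le_sum; intro a _
    apply Finset.sum_le_sum; intro b _
    rw [← sq_abs]
    exact pow_le_pow_left₀ (abs_nonneg _) (h i j a b) 2
  refine this.trans (le_of_eq ?_)
  simp; ring

/-- Lower triangular factor. -/
lemma nsq_lower {k m : Type*} [Fintype k] [Fintype m] [DecidableEq k] [DecidableEq m]
    (X : Matrix m k ℝ) (s t c : ℝ) (x : k ⊕ m → ℝ) (h1 : s ^ 2 + 2 * frob X ≤ c)
    (h2 : 2 * t ^ 2 ≤ c) :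
    nsq (fromBlocks (s • (1 : Matrix k k ℝ)) 0 X (t • (1 : Matrix m m ℝ)) *ᵥ x) ≤ c * nsq x := by
  rw [fromBlocks_mulVec, nsq_elim, nsq_sum x]
  simp only [smul_mulVec, one_mulVec, zero_mulVec, add_zero, nsq_smul]
  have := nsq_add_le (X *ᵥ (x ∘ Sum.inl)) (t • (x ∘ Sum.inr))
  rw [nsq_smul] at this
  have h3 := nsq_mulVec_le_frob X (x ∘ Sum.inl)
  nlinarith [nsq_nonneg (x ∘ Sum.inl), nsq_nonneg (x ∘ Sum.inr)]

/-- Upper triangular factor. -/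
lemma nsq_upper {k m : Type*} [Fintype k] [Fintype m] [DecidableEq k] [DecidableEq m]
    (Y : Matrix k m ℝ) (s t c : ℝ) (x : k ⊕ m → ℝ) (h1 : t ^ 2 + 2 * frob Y ≤ c)
    (h2 : 2 * s ^ 2 ≤ c) :
    nsq (fromBlocks (s • (1 : Matrix k k ℝ)) Y 0 (t • (1 : Matrix m m ℝ)) *ᵥ x) ≤ c * nsq x := by
  rw [fromBlocks_mulVec, nsq_elim, nsq_sum x]
  simp only [smul_mulVec, one_mulVec, zero_mulVec, zero_add, nsq_smul]
  have := nsq_add_le (s • (x ∘ Sum.inl)) (Y *ᵥ (x ∘ Sum.inr))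
  rw [nsq_smul] at this
  have h3 := nsq_mulVec_le_frob Y (x ∘ Sum.inr)
  nlinarith [nsq_nonneg (x ∘ Sum.inl), nsq_nonneg (x ∘ Sum.inr)]

lemma sval_block_le {k m n : ℕ} (D : Matrix (Fin k) (Fin k) ℝ) (C : Matrix (Fin m) (Fin n) ℝ)
    {f : ℝ} (hf : 0 ≤ f) (hC : ∀ v, nsq (C *ᵥ v) ≤ f * nsq v) (hD : ∀ u, f * nsq u ≤ nsq (D *ᵥ u))
    {j : ℕ} (hj : 1 ≤ j) (hjk : j ≤ k) :
    sval (fromBlocks D 0 0 C) j ≤ sval D j := by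
  have h0 : √f ≤ sval D j := by
    apply le_sval_of_test D (1 : Matrix (Fin k) (Fin k) ℝ) hj (by simpa using hjk)
    · simp
    · intro y; rw [Real.sq_sqrt hf]; simpa using hD y
  apply le_sval _ hj
  intro B hB
  refine (sval_le _ ((fromRows (1 : Matrix (Fin k) (Fin k) ℝ) (0 : Matrix (Fin m) (Fin k) ℝ)) * B *
    fromCols (1 : Matrix (Fin k) (Fin k) ℝ) (0 : Matrix (Fin k) (Fin n) ℝ)) ?_).trans ?_
  · exact lt_of_le_of_lt ((Matrix.rank_mul_le_left _ _).trans (Matrix.rank_mul_le_right _ _)) hB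
  · have e : fromBlocks D 0 0 C - (fromRows (1 : Matrix (Fin k) (Fin k) ℝ) (0 : Matrix (Fin m) (Fin k) ℝ)) * B *
        fromCols (1 : Matrix (Fin k) (Fin k) ℝ) (0 : Matrix (Fin k) (Fin n) ℝ)
        = fromBlocks (D - B) 0 0 C := by
      rw [fromRows_mul, fromRows_mul_fromCols]
      ext (i | i) (l | l) <;> simp
    rw [e]
    apply specNorm_le _ (specNorm_nonneg _)
    intro x
    rw [fromBlocks_mulVec, nsq_elim, nsq_sum x]
    simp only [zero_mulVec, zero_add, add_zero]
    have h1 := nsq_mulVec_le (D - B) (x ∘ Sum.inl)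
    have h2 := hC (x ∘ Sum.inr)
    have h3 : f ≤ specNorm (D - B) ^ 2 := by
      have := h0.trans (sval_le D B hB)
      rw [← Real.sq_sqrt hf]
      exact pow_le_pow_left₀ (Real.sqrt_nonneg _) this 2
    nlinarith [nsq_nonneg (x ∘ Sum.inl), nsq_nonneg (x ∘ Sum.inr)]

lemma sval_block_ge {k m n : ℕ} (D : Matrix (Fin k) (Fin k) ℝ) (C : Matrix (Fin m) (Fin n) ℝ)
    {f : ℝ} (hf : 0 ≤ f) (hC : ∀ v, nsq (C *ᵥ v) ≤ f * nsq v) (hD : ∀ u, f * nsq u ≤ nsq (D *ᵥ u))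
    {j : ℕ} (hj : 1 ≤ j) (hjn : j ≤ n) :
    sval C j ≤ sval (fromBlocks D 0 0 C) (k + j) := by
  obtain ⟨W, hW1, hW2⟩ := exists_test C hj (by simpa using hjn)
  have hcf : sval C j ^ 2 ≤ f := by
    let y : Fin j → ℝ := fun _ => 1
    have hy : 0 < nsq y := by
      apply nsq_pos
      intro h
      have := congrFun h ⟨0, hj⟩
      simp [y] at this
    by_contra! hlt
    have h1 := hW2 y
    have h2 := hC (W *ᵥ y)
    have h3 := hW1 y
    have h4 := nsq_nonneg (W *ᵥ y)
    have h5 := sq_nonneg (sval C j)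
    nlinarith
  apply le_sval_of_test _ (fromBlocks (1 : Matrix (Fin k) (Fin k) ℝ) 0 0 W) (by omega) (by simp)
  · intro y
    rw [fromBlocks_mulVec, nsq_elim, nsq_sum y]
    simpa using hW1 _
  · intro y
    rw [fromBlocks_mulVec, fromBlocks_mulVec, nsq_elim, nsq_sum y]
    simp only [zero_mulVec, zero_add, add_zero, one_mulVec, Sum.elim_comp_inl, Sum.elim_comp_inr]
    have h1 := hW2 (y ∘ Sum.inr)
    have h2 := hD (y ∘ Sum.inl)
    nlinarith [nsq_nonneg (y ∘ Sum.inl)]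

lemma sval_corner_le {k m n : ℕ} (C : Matrix (Fin m) (Fin n) ℝ) {j : ℕ} (hj : 1 ≤ j) :
    sval (fromBlocks (0 : Matrix (Fin k) (Fin k) ℝ) 0 0 C) j ≤ sval C j := by
  have := sval_mul_mul_le (fromRows (0 : Matrix (Fin k) (Fin m) ℝ) (1 : Matrix (Fin m) (Fin m) ℝ)) C
    (fromCols (0 : Matrix (Fin n) (Fin k) ℝ) (1 : Matrix (Fin n) (Fin n) ℝ)) hj one_pos one_pos ?_ ?_
  · rw [fromRows_mul, fromRows_mul_fromCols] at this
    simpa using this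
  · intro x
    rw [fromRows_mulVec, nsq_elim]; simp [nsq]
  · intro x
    rw [fromCols_mulVec, nsq_sum x]; simp [nsq_nonneg]

lemma sval_sub_le {k m n : ℕ} (A11 : Matrix (Fin k) (Fin k) ℝ) (A12 : Matrix (Fin k) (Fin n) ℝ)
    (A21 : Matrix (Fin m) (Fin k) ℝ) (A22 : Matrix (Fin m) (Fin n) ℝ) {j : ℕ} (hj : 1 ≤ j) :
    sval A11 j ≤ sval (fromBlocks A11 A12 A21 A22) j := by
  have := sval_mul_mul_le (fromCols (1 : Matrix (Fin k) (Fin k) ℝ) (0 : Matrix (Fin k) (Fin m) ℝ))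
    (fromBlocks A11 A12 A21 A22) (fromRows (1 : Matrix (Fin k) (Fin k) ℝ) (0 : Matrix (Fin n) (Fin k) ℝ))
    hj one_pos one_pos ?_ ?_
  · rw [fromCols_mul_fromBlocks, fromCols_mul_fromRows] at this
    simpa using this
  · intro x
    rw [fromCols_mulVec, nsq_sum x]; simp [nsq_nonneg]
  · intro x
    rw [fromRows_mulVec, nsq_elim]; simp [nsq]

/-! Determinants -/

lemma diffOne_update {k m : ℕ} (q : Fin k) (i : Fin m) :
    DiffOne (Sum.inl : Fin k → Fin k ⊕ Fin m) (Function.update Sum.inl q (Sum.inr i)) := by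
  constructor
  · intro a b hab
    simp only [Function.update_apply] at hab
    split_ifs at hab <;> simp_all
  · refine (Finset.card_le_card (t := {Sum.inr i}) ?_).trans (by simp)
    intro x hx
    simp only [Finset.mem_sdiff, Finset.mem_image, Finset.mem_univ, true_and] at hx
    obtain ⟨⟨a, rfl⟩, h2⟩ := hx
    by_cases ha : a = q
    · subst ha; simp
    · exact absurd ⟨a, by simp [ha]⟩ h2

lemma diffOne_self {k m : ℕ} :
    DiffOne (Sum.inl : Fin k → Fin k ⊕ Fin m) Sum.inl :=
  ⟨Sum.inl_injective, by simp⟩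

lemma det_updateCol_eq {k n : ℕ} (A11 : Matrix (Fin k) (Fin k) ℝ) (A12 : Matrix (Fin k) (Fin n) ℝ)
    (hd : A11.det ≠ 0) (p : Fin k) (j : Fin n) :
    (A11.updateCol p (fun a => A12 a j)).det = A11.det * (A11⁻¹ * A12) p j := by
  rw [← cramer_apply, cramer_eq_adjugate_mulVec]
  have : A11⁻¹ * A12 = A11.det⁻¹ • (A11.adjugate * A12) := by
    rw [Matrix.inv_def, Ring.inverse_eq_inv', Matrix.smul_mul]
  rw [this]
  simp only [Matrix.smul_apply, smul_eq_mul, mulVec, mul_apply, dotProduct]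
  field_simp

lemma det_updateRow_eq {k m : ℕ} (A11 : Matrix (Fin k) (Fin k) ℝ) (A21 : Matrix (Fin m) (Fin k) ℝ)
    (hd : A11.det ≠ 0) (i : Fin m) (q : Fin k) :
    (A11.updateRow q (A21 i)).det = A11.det * (A21 * A11⁻¹) i q := by
  have := det_updateCol_eq A11ᵀ A21ᵀ (by rwa [det_transpose]) q i
  rw [← transpose_nonsing_inv, ← transpose_mul, det_transpose] at this
  rw [← det_transpose, ← updateCol_transpose]
  exact this

lemma det_swap {k m n : ℕ} (A11 : Matrix (Fin k) (Fin k) ℝ) (A12 : Matrix (Fin k) (Fin n) ℝ)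
    (A21 : Matrix (Fin m) (Fin k) ℝ) (A22 : Matrix (Fin m) (Fin n) ℝ)
    (hd : A11.det ≠ 0) (i : Fin m) (q : Fin k) (p : Fin k) (j : Fin n) :
    ((fromBlocks A11 A12 A21 A22).submatrix (Function.update Sum.inl q (Sum.inr i))
      (Function.update Sum.inl p (Sum.inr j))).det =
    A11.det * ((A21 * A11⁻¹) i q * (A11⁻¹ * A12) p j +
      (A22 - A21 * A11⁻¹ * A12) i j * A11⁻¹ p q) := by
  set N := A11.updateCol p (fun a => A12 a j) with hN
  set X := A21 * A11⁻¹ with hX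
  have hXA : X * A11 = A21 := by
    rw [hX, Matrix.mul_assoc, nonsing_inv_mul _ (isUnit_iff_ne_zero.mpr hd), Matrix.mul_one]
  have e : (fromBlocks A11 A12 A21 A22).submatrix (Function.update Sum.inl q (Sum.inr i))
      (Function.update Sum.inl p (Sum.inr j)) =
      N.updateRow q (X i ᵥ* N + (A22 - X * A12) i j • Pi.single p 1) := by
    ext a b
    by_cases ha : a = q
    · subst ha
      by_cases hb : b = p
      · subst hb
        simp [hN, vecMul, dotProduct, mul_apply]
      · have := congrFun (congrFun hXA i) b
        simp [hN, vecMul, dotProduct, mul_apply, hb] at this ⊢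
        exact this.symm
    · by_cases hb : b = p
      · subst hb
        simp [hN, ha]
      · simp [hN, ha, hb]
  have h1 : (N.updateRow q (X i ᵥ* N)).det = X i q * N.det := by
    have : X i ᵥ* N = ∑ a, X i a • N a := by
      ext b; simp [vecMul, dotProduct]
    rw [this, det_updateRow_sum]
    simp
  have h2 : (N.updateRow q (Pi.single p 1)).det = A11.det * A11⁻¹ p q := by
    rw [← adjugate_apply]
    have t1 : N.adjugate p q = A11.adjugate p q := by
      rw [← transpose_apply N.adjugate, ← transpose_apply A11.adjugate, adjugate_transpose,
        adjugate_transpose, adjugate_apply, adjugate_apply, hN, ← updateRow_transpose,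
        updateRow_idem]
    rw [t1, Matrix.inv_def, Ring.inverse_eq_inv']
    simp only [Matrix.smul_apply, smul_eq_mul]
    field_simp
  rw [e, det_updateRow_add, det_updateRow_smul, h1, h2, det_updateCol_eq _ _ hd]
  ring

lemma core_common {k m n : ℕ} (hk : 1 ≤ k) {γ : ℝ} (hγ : 1 ≤ γ)
    (A11 Ai : Matrix (Fin k) (Fin k) ℝ) (X : Matrix (Fin m) (Fin k) ℝ)
    (Y : Matrix (Fin k) (Fin n) ℝ) (C : Matrix (Fin m) (Fin n) ℝ) (hinv : Ai * A11 = 1)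
    (hX : ∀ i j, |X i j| ≤ γ) (hY : ∀ i j, |Y i j| ≤ γ)
    (hC : ∀ i j p q, |C i j * Ai p q| ≤ 2 * γ ^ 2) :
    ∃ α β p r : ℝ, 0 < α ∧ 0 < β ∧ 0 < p ∧ 0 < r ∧
      p * r ≤ 1 + 5 * γ ^ 2 * k * Real.sqrt ((k + m) * (k + n)) ∧
      α ^ 2 + 2 * frob X ≤ p ^ 2 ∧ 1 + 2 * frob X ≤ p ^ 2 ∧ 2 * α ^ 2 ≤ p ^ 2 ∧ 2 ≤ p ^ 2 ∧
      β ^ 2 + 2 * frob Y ≤ r ^ 2 ∧ 1 + 2 * frob Y ≤ r ^ 2 ∧ 2 * β ^ 2 ≤ r ^ 2 ∧ 2 ≤ r ^ 2 ∧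
      ∀ u, frob C * nsq u ≤ (α * β) ^ 2 * nsq (A11 *ᵥ u) := by
  have hk' : (1 : ℝ) ≤ k := by exact_mod_cast hk
  obtain ⟨a, ha⟩ : ∃ a, a = γ ^ 2 * (k : ℝ) := ⟨_, rfl⟩
  have hg2 : 1 ≤ γ ^ 2 := by nlinarith
  have ha1 : 1 ≤ a := by rw [ha]; nlinarith
  have hm0 : (0 : ℝ) ≤ m := Nat.cast_nonneg m
  have hn0 : (0 : ℝ) ≤ n := Nat.cast_nonneg n
  obtain ⟨M, hM⟩ : ∃ M, M = (k : ℝ) + m := ⟨_, rfl⟩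
  obtain ⟨N, hN⟩ : ∃ N, N = (k : ℝ) + n := ⟨_, rfl⟩
  have hM1 : 1 ≤ M := by linarith
  have hN1 : 1 ≤ N := by linarith
  have haM : 1 ≤ a * M := by nlinarith
  have haN : 1 ≤ a * N := by nlinarith
  have hfX : frob X ≤ a * M := by
    refine (frob_le X hX).trans ?_
    rw [ha, hM]
    have : 0 ≤ γ ^ 2 * (k : ℝ) * k := by positivity
    linarith
  have hfX2 : frob X + a ≤ a * M := by
    refine (add_le_add_left (frob_le X hX) a).trans ?_
    rw [ha, hM]
    have : 0 ≤ γ ^ 2 * (k : ℝ) * (k - 1) := mul_nonneg (by positivity) (by linarith)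
    linarith
  have hfY2 : frob Y + a ≤ a * N := by
    refine (add_le_add_left (frob_le Y hY) a).trans ?_
    rw [ha, hN]
    have : 0 ≤ γ ^ 2 * (k : ℝ) * (k - 1) := mul_nonneg (by positivity) (by linarith)
    linarith
  have e1 : √(2 * a * M) ^ 2 = 2 * a * M := Real.sq_sqrt (by positivity)
  have e2 : √(2 * a * N) ^ 2 = 2 * a * N := Real.sq_sqrt (by positivity)
  have e3 : √(4 * a * M) ^ 2 = 4 * a * M := Real.sq_sqrt (by positivity)
  have e4 : √(4 * a * N) ^ 2 = 4 * a * N := Real.sq_sqrt (by positivity)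
  refine ⟨√(2 * a * M), √(2 * a * N), √(4 * a * M), √(4 * a * N), by positivity, by positivity,
    by positivity, by positivity, ?_, ?_, ?_, ?_, ?_, ?_, ?_, ?_, ?_, ?_⟩
  · rw [← Real.sqrt_mul (by positivity), ← hM, ← hN]
    have : 4 * a * M * (4 * a * N) = (4 * a) ^ 2 * (M * N) := by ring
    rw [this, Real.sqrt_mul (by positivity), Real.sqrt_sq (by positivity)]
    have h0 : 5 * γ ^ 2 * k * √(M * N) = 5 * (a * √(M * N)) := by rw [ha]; ring
    have : 0 ≤ a * √(M * N) := by positivity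
    linarith
  all_goals first | (rw [e1, e3]; linarith) | (rw [e3]; linarith) | (rw [e2, e4]; linarith) | (rw [e4]; linarith) | skip
  intro u
  have h1 : nsq u ≤ frob Ai * nsq (A11 *ᵥ u) := by
    have := nsq_mulVec_le_frob Ai (A11 *ᵥ u)
    rwa [mulVec_mulVec, hinv, one_mulVec] at this
  have h2 := frob_mul_frob_le C Ai hC
  have h3 : (2 * γ ^ 2) ^ 2 * m * n * k * k ≤ (√(2 * a * M) * √(2 * a * N)) ^ 2 := by
    rw [mul_pow √(2 * a * M), e1, e2]
    calc (2 * γ ^ 2) ^ 2 * m * n * k * k = (2 * a) ^ 2 * (m * n) := by rw [ha]; ring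
      _ ≤ (2 * a) ^ 2 * (M * N) := by
        gcongr <;> linarith
      _ = _ := by ring
  calc frob C * nsq u ≤ frob C * (frob Ai * nsq (A11 *ᵥ u)) :=
        mul_le_mul_of_nonneg_left h1 (frob_nonneg C)
    _ = (frob C * frob Ai) * nsq (A11 *ᵥ u) := by ring
    _ ≤ _ := mul_le_mul_of_nonneg_right (h2.trans h3) (nsq_nonneg _)

lemma core_b {k m n : ℕ} (hk : 1 ≤ k) {γ : ℝ} (hγ : 1 ≤ γ)
    (A11 Ai : Matrix (Fin k) (Fin k) ℝ) (X : Matrix (Fin m) (Fin k) ℝ)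
    (Y : Matrix (Fin k) (Fin n) ℝ) (C : Matrix (Fin m) (Fin n) ℝ) (hinv : Ai * A11 = 1)
    (hX : ∀ i j, |X i j| ≤ γ) (hY : ∀ i j, |Y i j| ≤ γ)
    (hC : ∀ i j p q, |C i j * Ai p q| ≤ 2 * γ ^ 2) {j : ℕ} (hj : 1 ≤ j) (hjk : j ≤ k) :
    sval (fromBlocks A11 (A11 * Y) (X * A11) (C + X * A11 * Y)) j ≤
      (1 + 5 * γ ^ 2 * k * Real.sqrt ((k + m) * (k + n))) *
        sval (fromBlocks A11 (A11 * Y) (X * A11) (X * A11 * Y)) j ∧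
    sval (fromBlocks A11 (A11 * Y) (X * A11) (X * A11 * Y)) j ≤
      (1 + 5 * γ ^ 2 * k * Real.sqrt ((k + m) * (k + n))) *
        sval (fromBlocks A11 (A11 * Y) (X * A11) (C + X * A11 * Y)) j := by
  obtain ⟨α, β, p, r, hα, hβ, hp, hr, hpr, a1, a2, a3, a4, b1, b2, b3, b4, hf⟩ :=
    core_common hk hγ A11 Ai X Y C hinv hX hY hC
  have gen : ∀ (D : Matrix (Fin m) (Fin n) ℝ) (f : ℝ), 0 ≤ f →
      (∀ v, nsq (D *ᵥ v) ≤ f * nsq v) → (∀ u, f * nsq u ≤ nsq (A11 *ᵥ u)) →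
      sval (fromBlocks A11 (A11 * Y) (X * A11) ((α * β) • D + X * A11 * Y)) j ≤
      (1 + 5 * γ ^ 2 * k * Real.sqrt ((k + m) * (k + n))) * sval A11 j := by
    intro D f hf0 hD1 hD2
    have h1 := sval_block_le A11 D hf0 hD1 hD2 hj hjk
    have h2 := sval_mul_mul_le (fromBlocks ((1 : ℝ) • (1 : Matrix (Fin k) (Fin k) ℝ)) 0 X
        (α • (1 : Matrix (Fin m) (Fin m) ℝ))) (fromBlocks A11 0 0 D)
      (fromBlocks ((1 : ℝ) • (1 : Matrix (Fin k) (Fin k) ℝ)) Y 0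
        (β • (1 : Matrix (Fin n) (Fin n) ℝ))) hj hp hr
      (fun x => nsq_lower X 1 α _ x (by linarith) (by linarith))
      (fun x => nsq_upper Y 1 β _ x (by linarith) (by linarith))
    have e : (fromBlocks ((1 : ℝ) • (1 : Matrix (Fin k) (Fin k) ℝ)) 0 X
        (α • (1 : Matrix (Fin m) (Fin m) ℝ))) * (fromBlocks A11 0 0 D) *
      (fromBlocks ((1 : ℝ) • (1 : Matrix (Fin k) (Fin k) ℝ)) Y 0
        (β • (1 : Matrix (Fin n) (Fin n) ℝ))) =
        fromBlocks A11 (A11 * Y) (X * A11) ((α * β) • D + X * A11 * Y) := by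
      rw [fromBlocks_multiply, fromBlocks_multiply]
      simp [smul_smul, mul_comm, add_comm]
    rw [e] at h2
    calc _ ≤ p * r * sval (fromBlocks A11 0 0 D) j := h2
      _ ≤ p * r * sval A11 j := mul_le_mul_of_nonneg_left h1 (by positivity)
      _ ≤ _ := mul_le_mul_of_nonneg_right hpr (sval_nonneg _ _)
  have hK : 0 ≤ 1 + 5 * γ ^ 2 * k * Real.sqrt ((k + m) * (k + n)) := by positivity
  constructor
  · have hab : 0 < α * β := by positivity
    have := gen ((α * β)⁻¹ • C) (((α * β)⁻¹) ^ 2 * frob C)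
      (mul_nonneg (by positivity) (frob_nonneg C)) ?_ ?_
    · rw [smul_smul, mul_inv_cancel₀ hab.ne', one_smul] at this
      exact this.trans (mul_le_mul_of_nonneg_left (sval_sub_le _ _ _ _ hj) hK)
    · intro v
      rw [smul_mulVec, nsq_smul, mul_assoc]
      exact mul_le_mul_of_nonneg_left (nsq_mulVec_le_frob C v) (by positivity)
    · intro u
      rw [mul_assoc, inv_pow, inv_mul_le_iff₀ (by positivity)]
      exact hf u
  · have := gen 0 0 le_rfl (by intro v; simp [nsq]) (by intro u; simpa using nsq_nonneg _)
    rw [smul_zero, zero_add] at this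
    exact this.trans (mul_le_mul_of_nonneg_left (sval_sub_le _ _ _ _ hj) hK)

lemma core_c {k m n : ℕ} (hk : 1 ≤ k) {γ : ℝ} (hγ : 1 ≤ γ)
    (A11 Ai : Matrix (Fin k) (Fin k) ℝ) (X : Matrix (Fin m) (Fin k) ℝ)
    (Y : Matrix (Fin k) (Fin n) ℝ) (C : Matrix (Fin m) (Fin n) ℝ) (hinv : Ai * A11 = 1)
    (hX : ∀ i j, |X i j| ≤ γ) (hY : ∀ i j, |Y i j| ≤ γ)
    (hC : ∀ i j p q, |C i j * Ai p q| ≤ 2 * γ ^ 2) {j : ℕ} (hj : 1 ≤ j) (hjn : j ≤ n) :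
    sval (fromBlocks (0 : Matrix (Fin k) (Fin k) ℝ) 0 0 C) j ≤
      (1 + 5 * γ ^ 2 * k * Real.sqrt ((k + m) * (k + n))) *
        sval (fromBlocks A11 (A11 * Y) (X * A11) (C + X * A11 * Y)) (k + j) := by
  obtain ⟨α, β, p, r, hα, hβ, hp, hr, hpr, a1, a2, a3, a4, b1, b2, b3, b4, hf⟩ :=
    core_common hk hγ A11 Ai X Y C hinv hX hY hC
  refine (sval_corner_le C hj).trans ?_
  have h1 := sval_block_ge ((α * β) • A11) C (frob_nonneg C) (nsq_mulVec_le_frob C)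
    (by intro u; rw [smul_mulVec, nsq_smul]; exact hf u) hj hjn
  have h2 := sval_mul_mul_le (fromBlocks (α • (1 : Matrix (Fin k) (Fin k) ℝ)) 0 (-X)
      ((1 : ℝ) • (1 : Matrix (Fin m) (Fin m) ℝ)))
    (fromBlocks A11 (A11 * Y) (X * A11) (C + X * A11 * Y))
    (fromBlocks (β • (1 : Matrix (Fin k) (Fin k) ℝ)) (-Y) 0
      ((1 : ℝ) • (1 : Matrix (Fin n) (Fin n) ℝ))) (j := k + j) (by omega) hp hr
    (fun x => nsq_lower (-X) α 1 _ x (by rw [frob_neg]; linarith) (by linarith))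
    (fun x => nsq_upper (-Y) β 1 _ x (by rw [frob_neg]; linarith) (by linarith))
  have e : (fromBlocks (α • (1 : Matrix (Fin k) (Fin k) ℝ)) 0 (-X)
      ((1 : ℝ) • (1 : Matrix (Fin m) (Fin m) ℝ))) *
    (fromBlocks A11 (A11 * Y) (X * A11) (C + X * A11 * Y)) *
    (fromBlocks (β • (1 : Matrix (Fin k) (Fin k) ℝ)) (-Y) 0
      ((1 : ℝ) • (1 : Matrix (Fin n) (Fin n) ℝ))) = fromBlocks ((α * β) • A11) 0 0 C := by
    rw [fromBlocks_multiply, fromBlocks_multiply]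
    simp [smul_smul, mul_comm, Matrix.mul_assoc]
  rw [e] at h2
  exact h1.trans (h2.trans (mul_le_mul_of_nonneg_right hpr (sval_nonneg _ _)))

lemma rank_add_le' {m n : Type*} [Fintype m] [Fintype n] (A B : Matrix m n ℝ) :
    (A + B).rank ≤ A.rank + B.rank := by
  unfold Matrix.rank
  rw [Matrix.mulVecLin_add]
  exact (Submodule.finrank_mono (LinearMap.range_add_le _ _)).trans
    (Submodule.finrank_add_le_finrank_add_finrank _ _)

theorem statement_9 {k m' n' : ℕ} (γ : ℝ) (hγ : 1 ≤ γ)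
    (A11 : Matrix (Fin k) (Fin k) ℝ) (A12 : Matrix (Fin k) (Fin n') ℝ)
    (A21 : Matrix (Fin m') (Fin k) ℝ) (A22 : Matrix (Fin m') (Fin n') ℝ)
    (hpos : 0 < vol A11)
    (hmax : ∀ (r : Fin k → Fin k ⊕ Fin m') (c : Fin k → Fin k ⊕ Fin n'),
      DiffOne Sum.inl r → DiffOne Sum.inl c →
      vol ((Matrix.fromBlocks A11 A12 A21 A22).submatrix r c) ≤ γ * vol A11) :
    ((∀ i j, |(A11⁻¹ * A12) i j| ≤ γ) ∧ (∀ i j, |(A21 * A11⁻¹) i j| ≤ γ)) ∧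
    (∀ j : ℕ, 1 ≤ j → j ≤ k →
      (1 / (1 + 5 * γ ^ 2 * k * Real.sqrt ((k + m') * (k + n')))) *
          sval (Matrix.fromBlocks A11 A12 A21 A22) j ≤
        sval (Matrix.fromBlocks A11 A12 A21 (A21 * A11⁻¹ * A12)) j ∧
      sval (Matrix.fromBlocks A11 A12 A21 (A21 * A11⁻¹ * A12)) j ≤
        (1 + 5 * γ ^ 2 * k * Real.sqrt ((k + m') * (k + n'))) *
          sval (Matrix.fromBlocks A11 A12 A21 A22) j) ∧
    (∀ j : ℕ, 1 ≤ j → j ≤ min (k + m') (k + n') - k →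
      sval (Matrix.fromBlocks A11 A12 A21 A22) (k + j) ≤
        sval (Matrix.fromBlocks A11 A12 A21 A22
              - Matrix.fromBlocks A11 A12 A21 (A21 * A11⁻¹ * A12)) j ∧
      sval (Matrix.fromBlocks A11 A12 A21 A22
              - Matrix.fromBlocks A11 A12 A21 (A21 * A11⁻¹ * A12)) j ≤
        (1 + 5 * γ ^ 2 * k * Real.sqrt ((k + m') * (k + n'))) *
          sval (Matrix.fromBlocks A11 A12 A21 A22) (k + j)) := by
  have hdet : A11.det ≠ 0 := by
    rw [vol_eq_abs_det] at hpos
    exact abs_pos.mp hpos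
  have hdpos : 0 < |A11.det| := abs_pos.mpr hdet
  have hY : ∀ i j, |(A11⁻¹ * A12) i j| ≤ γ := by
    intro p j
    have h := hmax Sum.inl (Function.update Sum.inl p (Sum.inr j)) diffOne_self
      (diffOne_update p j)
    have e : (fromBlocks A11 A12 A21 A22).submatrix Sum.inl
        (Function.update Sum.inl p (Sum.inr j)) = A11.updateCol p (fun a => A12 a j) := by
      ext a b
      by_cases hb : b = p
      · subst hb; simp
      · simp [hb]
    rw [e, vol_eq_abs_det, vol_eq_abs_det, det_updateCol_eq _ _ hdet, abs_mul, mul_comm γ] at h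
    exact le_of_mul_le_mul_left h hdpos
  have hX : ∀ i j, |(A21 * A11⁻¹) i j| ≤ γ := by
    intro i q
    have h := hmax (Function.update Sum.inl q (Sum.inr i)) Sum.inl (diffOne_update q i)
      diffOne_self
    have e : (fromBlocks A11 A12 A21 A22).submatrix (Function.update Sum.inl q (Sum.inr i))
        Sum.inl = A11.updateRow q (A21 i) := by
      ext a b
      by_cases ha : a = q
      · subst ha; simp
      · simp [ha]
    rw [e, vol_eq_abs_det, vol_eq_abs_det, det_updateRow_eq _ _ hdet, abs_mul, mul_comm γ] at h
    exact le_of_mul_le_mul_left h hdpos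
  set X := A21 * A11⁻¹ with hXdef
  set Y := A11⁻¹ * A12 with hYdef
  set C := A22 - X * A12 with hCdef
  have hC : ∀ i j p q, |C i j * A11⁻¹ p q| ≤ 2 * γ ^ 2 := by
    intro i j p q
    have h := hmax _ _ (diffOne_update q i) (diffOne_update p j)
    rw [vol_eq_abs_det, vol_eq_abs_det, det_swap _ _ _ _ hdet, abs_mul, mul_comm γ] at h
    have h := le_of_mul_le_mul_left h hdpos
    have h1 : |X i q * Y p j| ≤ γ * γ := by
      rw [abs_mul]
      exact mul_le_mul (hX _ _) (hY _ _) (abs_nonneg _) (by linarith)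
    have h2 : |C i j * A11⁻¹ p q| ≤ |X i q * Y p j + C i j * A11⁻¹ p q| + |X i q * Y p j| := by
      have := abs_sub (X i q * Y p j + C i j * A11⁻¹ p q) (X i q * Y p j)
      simpa using this
    nlinarith
  have hXA : X * A11 = A21 := by
    rw [hXdef, Matrix.mul_assoc, nonsing_inv_mul _ (isUnit_iff_ne_zero.mpr hdet), Matrix.mul_one]
  have hAY : A11 * Y = A12 := by
    rw [hYdef, ← Matrix.mul_assoc, mul_nonsing_inv _ (isUnit_iff_ne_zero.mpr hdet), Matrix.one_mul]
  have hXY : X * A12 = X * A11 * Y := by rw [Matrix.mul_assoc X, hAY]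
  have hsub : fromBlocks A11 A12 A21 A22 - fromBlocks A11 A12 A21 (X * A12) =
      fromBlocks 0 0 0 C := by
    ext (i | i) (j | j) <;> simp [hCdef]
  have hA22 : A22 = C + X * A12 := by rw [hCdef]; abel
  have hinv : A11⁻¹ * A11 = 1 := nonsing_inv_mul _ (isUnit_iff_ne_zero.mpr hdet)
  refine ⟨⟨hY, hX⟩, ?_, ?_⟩
  · intro j hj hjk
    have hk : 1 ≤ k := hj.trans hjk
    obtain ⟨h1, h2⟩ := core_b hk hγ A11 A11⁻¹ X Y C hinv hX hY hC hj hjk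
    rw [hXA, hAY, ← hXA, ← hXY, hXA, ← hA22] at h1 h2
    have hK : 0 < 1 + 5 * γ ^ 2 * k * Real.sqrt ((k + m') * (k + n')) := by positivity
    refine ⟨?_, h2⟩
    rw [one_div, inv_mul_le_iff₀ hK]
    exact h1
  · intro j hj hjk
    constructor
    · rw [hsub]
      apply le_sval _ hj
      intro B hB
      have e : fromBlocks (0 : Matrix (Fin k) (Fin k) ℝ) 0 0 C - B =
          fromBlocks A11 A12 A21 A22 - (fromBlocks A11 A12 A21 (X * A12) + B) := by
        rw [← hsub]; abel
      rw [e]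
      apply sval_le
      have hr : (fromBlocks A11 A12 A21 (X * A12)).rank ≤ k := by
        have e2 : fromBlocks A11 A12 A21 (X * A12) =
            fromRows (1 : Matrix (Fin k) (Fin k) ℝ) X * fromCols A11 A12 := by
          rw [fromRows_mul_fromCols, hXA, Matrix.one_mul, Matrix.one_mul]
        rw [e2]
        refine (Matrix.rank_mul_le_left _ _).trans ((Matrix.rank_le_card_width _).trans (by simp))
      have := rank_add_le' (fromBlocks A11 A12 A21 (X * A12)) B
      omega
    · rcases Nat.eq_zero_or_pos k with hk | hk
      · subst hk
        have e : fromBlocks A11 A12 A21 (X * A12) = 0 := by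
          ext (i | i) (j | j)
          · exact i.elim0
          · exact i.elim0
          · exact j.elim0
          · simp
        rw [e]
        simp
      · have h := core_c hk hγ A11 A11⁻¹ X Y C hinv hX hY hC hj (by omega)
        rw [hXA, hAY, ← hXA, ← hXY, hXA, ← hA22] at h
        rw [hsub]
        exact h
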